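/- arXiv:2011.11723 — 4 statements merged into one kernel-verified Lean document; each statement's English description precedes it below -/
import Mathlib

section
/- Fix an integer M ≥ 1 and real numbers μ > 0, ν > 0. Let A be the M × M real matrix (indexed by 1,…,M) with A(m,m) = μ + ν for 1 ≤ m ≤ M−1, A(M,M) = ν, A(m,m+1) = −μ for 1 ≤ m ≤ M−1, A(m+1,m) = −ν for 1 ≤ m ≤ M−1, and all other entries zero. Then A is invertible and its inverse is given entrywise by A⁻¹(m,n) = (1/ν^n) · Σ_{k=1}^{min(m,n)} μ^{n−k} ν^{k−1} for all 1 ≤ m, n ≤ M. -/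
open Finset Matrix

/-!
The killed birth-death matrix factors as `A = U(ν, μ) * U(1, 1)ᵀ`, where `U(a, b)` has `a` on the
diagonal and `-b` on the superdiagonal: the generator takes the increments `xₘ - xₘ₋₁` and then
forms differences of consecutive increments, weighted by the rates. Each factor has an upper
triangular inverse with geometric entries `bⁿ⁻ᵐ / aⁿ⁻ᵐ⁺¹`, so `A⁻¹ = (U(1, 1)⁻¹)ᵀ * U(ν, μ)⁻¹`, and
the sum over `k ≤ min m n` is this matrix product.
-/

section

variable {R K : Type*} [CommRing R] [Field K] {M : ℕ}

/-- The `M × M` upper bidiagonal Toeplitz matrix with `a` on the diagonal and `-b` on the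
superdiagonal. The sign makes the entries of its inverse free of signs. -/
def upperBidiagonal (M : ℕ) (a b : R) : Matrix (Fin M) (Fin M) R :=
  of fun i j => if i = j then a else if (j : ℕ) = i + 1 then -b else 0

/-- The upper triangular Toeplitz matrix whose diagonals carry the coefficients of the geometric
series `1 / (a - b X) = ∑ d, (b ^ d / a ^ (d + 1)) X ^ d`; for `a ≠ 0` it is the inverse of
`upperBidiagonal M a b`. -/
def upperGeometric (M : ℕ) (a b : K) : Matrix (Fin M) (Fin M) K :=
  of fun i j => if i ≤ j then b ^ (j - i : ℕ) / a ^ (j - i + 1 : ℕ) else 0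

lemma upperBidiagonal_mul_apply (a b : R) {n : Type*} (B : Matrix (Fin M) n R) (i : Fin M) (j : n) :
    (upperBidiagonal M a b * B) i j =
      a * B i j - if h : (i : ℕ) + 1 < M then b * B ⟨i + 1, h⟩ j else 0 := by
  have row_split (k : Fin M) : upperBidiagonal M a b i k * B k j =
      (if k = i then a * B k j else 0) - if (k : ℕ) = i + 1 then b * B k j else 0 := by
    simp only [upperBidiagonal, of_apply]
    grind
  simp only [mul_apply, row_split, sum_sub_distrib, sum_ite_eq', mem_univ, if_true]
  congr 1
  split_ifs with h
  · have val_eq_iff (k : Fin M) : (k : ℕ) = i + 1 ↔ k = ⟨i + 1, h⟩ := by rw [Fin.ext_iff]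
    simp only [val_eq_iff, sum_ite_eq', mem_univ, if_true]
  · exact sum_eq_zero fun k _ => if_neg (by omega)

lemma upperBidiagonal_mul_upperGeometric {a : K} (ha : a ≠ 0) (b : K) :
    upperBidiagonal M a b * upperGeometric M a b = 1 := by
  ext i j
  simp only [upperBidiagonal_mul_apply, upperGeometric, of_apply, one_apply, Fin.le_def,
    Fin.ext_iff]
  rcases lt_trichotomy (i : ℕ) j with hij | hij | hij
  · obtain ⟨d, hd⟩ := Nat.exists_eq_add_of_lt hij
    rw [if_pos hij.le, dif_pos (by omega), if_pos (by omega), if_neg hij.ne,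
      show (j : ℕ) - i = d + 1 by omega, show (j : ℕ) - (i + 1) = d by omega]
    field_simp
    ring
  · simp [hij, ha]
  · simp [hij.not_ge, hij.ne', show ¬ (i : ℕ) + 1 ≤ j by omega]

lemma isUnit_upperBidiagonal {a : K} (ha : a ≠ 0) (b : K) : IsUnit (upperBidiagonal M a b) :=
  .of_mul_eq_one _ (upperBidiagonal_mul_upperGeometric ha b)

lemma inv_upperBidiagonal {a : K} (ha : a ≠ 0) (b : K) :
    (upperBidiagonal M a b)⁻¹ = upperGeometric M a b :=
  inv_eq_right_inv (upperBidiagonal_mul_upperGeometric ha b)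

lemma sum_fin_Iic_val_add_one {α : Type*} [AddCommMonoid α] (f : ℕ → α) (i : Fin M) :
    ∑ k ∈ Iic i, f (k + 1) = ∑ k ∈ Icc 1 ((i : ℕ) + 1), f k := by
  calc ∑ k ∈ Iic i, f (k + 1)
      = ∑ k ∈ Icc 0 (i : ℕ), f (k + 1) := by
        rw [← bot_eq_zero, Icc_bot, ← Fin.map_valEmbedding_Iic, sum_map]
        rfl
    _ = ∑ k ∈ Icc 1 ((i : ℕ) + 1), f k := by
        rw [← zero_add 1, ← map_add_right_Icc, sum_map]
        simp only [zero_add, addRightEmbedding_apply]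

lemma upperGeometric_one_one_transpose_mul_upperGeometric_apply {a : K} (ha : a ≠ 0) (b : K)
    (i j : Fin M) :
    ((upperGeometric M (1 : K) 1)ᵀ * upperGeometric M a b) i j =
      1 / a ^ ((j : ℕ) + 1) *
        ∑ k ∈ Icc 1 (min ((i : ℕ) + 1) ((j : ℕ) + 1)), b ^ ((j : ℕ) + 1 - k) * a ^ (k - 1) := by
  have support_eq : (univ.filter fun k => k ≤ i ∧ k ≤ j) = Iic (min i j) := by
    ext k
    simp only [mem_filter_univ, mem_Iic, le_min_iff]
  have geometric_term {k : Fin M} (hk : k ≤ j) :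
      b ^ (j - k : ℕ) / a ^ (j - k + 1 : ℕ) =
        1 / a ^ ((j : ℕ) + 1) * (b ^ ((j : ℕ) + 1 - (k + 1)) * a ^ ((k : ℕ) + 1 - 1)) := by
    have pow_split : a ^ ((j : ℕ) + 1) = a ^ (j - k + 1 : ℕ) * a ^ (k : ℕ) := by
      rw [← pow_add]
      congr 1
      omega
    rw [pow_split, Nat.add_sub_add_right, Nat.add_sub_cancel]
    field_simp
  have min_val : min ((i : ℕ) + 1) ((j : ℕ) + 1) = (min i j : Fin M) + 1 := by
    rw [Fin.coe_min]
    omega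
  calc ((upperGeometric M (1 : K) 1)ᵀ * upperGeometric M a b) i j
      = ∑ k ∈ Iic (min i j), b ^ (j - k : ℕ) / a ^ (j - k + 1 : ℕ) := by
        simp only [mul_apply, transpose_apply, upperGeometric, of_apply, one_pow, div_one,
          ite_zero_mul_ite_zero, one_mul, ← sum_filter, support_eq]
    _ = ∑ k ∈ Iic (min i j),
          1 / a ^ ((j : ℕ) + 1) * (b ^ ((j : ℕ) + 1 - (k + 1)) * a ^ ((k : ℕ) + 1 - 1)) :=
        sum_congr rfl fun k hk => geometric_term (le_min_iff.mp (mem_Iic.mp hk)).2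
    _ = _ := by
        rw [← mul_sum, min_val,
          sum_fin_Iic_val_add_one fun k => b ^ ((j : ℕ) + 1 - k) * a ^ (k - 1)]

/-- The matrix `-B₀` of the birth-death process with birth rate `μ` and death rate `ν` on
`{0, …, M}` restricted to the nonzero states; `i : Fin M` stands for the state `i + 1`. -/
def negKilledBirthDeath (M : ℕ) (μ ν : R) : Matrix (Fin M) (Fin M) R :=
  of fun i j =>
    if i = j then (if (i : ℕ) + 1 = M then ν else μ + ν)
    else if (j : ℕ) = (i : ℕ) + 1 then -μ
    else if (i : ℕ) = (j : ℕ) + 1 then -ν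
    else 0

lemma negKilledBirthDeath_eq_mul (M : ℕ) (μ ν : R) :
    negKilledBirthDeath M μ ν = upperBidiagonal M ν μ * (upperBidiagonal M 1 1)ᵀ := by
  ext i j
  simp only [upperBidiagonal_mul_apply]
  simp only [negKilledBirthDeath, upperBidiagonal, transpose_apply, of_apply, Fin.ext_iff]
  grind

theorem stmt_1_general (M : ℕ) (μ : K) {ν : K} (hν : ν ≠ 0) :
    IsUnit (negKilledBirthDeath M μ ν) ∧
      ∀ i j : Fin M,
        (negKilledBirthDeath M μ ν)⁻¹ i j =
          (1 / ν ^ ((j : ℕ) + 1)) *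
            ∑ k ∈ Finset.Icc 1 (min ((i : ℕ) + 1) ((j : ℕ) + 1)),
              μ ^ ((j : ℕ) + 1 - k) * ν ^ (k - 1) := by
  rw [negKilledBirthDeath_eq_mul]
  refine ⟨(isUnit_upperBidiagonal hν μ).mul
    ((isUnit_transpose _).mpr (isUnit_upperBidiagonal one_ne_zero 1)), fun i j => ?_⟩
  rw [Matrix.mul_inv_rev, ← transpose_nonsing_inv, inv_upperBidiagonal hν,
    inv_upperBidiagonal one_ne_zero, upperGeometric_one_one_transpose_mul_upperGeometric_apply hν]

end

/-- The tridiagonal matrix `A = -B₀` of the birth-death battery process is invertible,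
with inverse given entrywise by `A⁻¹(m,n) = ν⁻ⁿ ∑_{k=1}^{min(m,n)} μ^{n-k} ν^{k-1}`.
Here the index `i : Fin M` corresponds to the row/column `m = i + 1 ∈ {1, …, M}`. -/
theorem stmt_1 (M : ℕ) (hM : 1 ≤ M) (μ ν : ℝ) (hμ : 0 < μ) (hν : 0 < ν)
    (A : Matrix (Fin M) (Fin M) ℝ)
    (hA : ∀ i j : Fin M,
      A i j =
        if i = j then (if (i : ℕ) + 1 = M then ν else μ + ν)
        else if (j : ℕ) = (i : ℕ) + 1 then -μ
        else if (i : ℕ) = (j : ℕ) + 1 then -ν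
        else 0) :
    IsUnit A ∧
      ∀ i j : Fin M,
        A⁻¹ i j =
          (1 / ν ^ ((j : ℕ) + 1)) *
            ∑ k ∈ Finset.Icc 1 (min ((i : ℕ) + 1) ((j : ℕ) + 1)),
              μ ^ ((j : ℕ) + 1 - k) * ν ^ (k - 1) := by
  obtain rfl : A = negKilledBirthDeath M μ ν := by
    ext i j
    exact hA i j
  exact stmt_1_general M μ hν.ne'
end

section
/- Let M ≥ 1 and m with 1 ≤ m ≤ M be integers, and let μ, ν be positive reals with μ ≠ ν. Then Σ_{n=1}^{M} (1/ν^n) · Σ_{k=1}^{min(m,n)} μ^{n−k} ν^{k−1} = [ (μ/ν)^{M+1} · (1 − (μ/ν)^{−m}) ] / (1 − μ/ν) · 1/(ν − μ) − m/(μ − ν). -/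
open Finset

/-!
Summing over `n` first, each column `k` is a geometric progression with ratio `r = μ / ν` and sum
`(1 - r ^ (M + 1 - k)) / (ν - μ)`. These column sums are in turn an affine function of a geometric
progression in `k`: the constant part produces the term `-m / (μ - ν)`, the geometric part the
remaining one.
-/

lemma sum_Icc_one_min_comm {A : Type*} [AddCommMonoid A] (M m : ℕ) (f : ℕ → ℕ → A) :
    ∑ n ∈ Icc 1 M, ∑ k ∈ Icc 1 (min m n), f n k = ∑ k ∈ Icc 1 m, ∑ n ∈ Icc k M, f n k :=
  sum_comm' fun n k => by simp only [mem_Icc, le_min_iff]; omega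

section DivisionRing

variable {K : Type*} [DivisionRing K] {r : K}

lemma sum_Icc_pow_sub_left (hr : r ≠ 1) (k M : ℕ) :
    ∑ n ∈ Icc k M, r ^ (n - k) = (r ^ (M + 1 - k) - 1) / (r - 1) := by
  rw [← Ico_add_one_right_eq_Icc, sum_Ico_eq_sum_range]
  simp only [Nat.add_sub_cancel_left]
  exact geom_sum_eq hr _

lemma sum_Icc_one_pow_sub_right (hr : r ≠ 1) {m N : ℕ} (hmN : m ≤ N) :
    ∑ k ∈ Icc 1 m, r ^ (N - k) = (r ^ N - r ^ (N - m)) / (r - 1) := by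
  rw [← Ico_add_one_right_eq_Icc, sum_Ico_reflect (r ^ ·) 1 (Nat.add_le_add_right hmN 1),
    Nat.add_sub_add_right, Nat.add_sub_cancel]
  exact geom_sum_Ico hr (Nat.sub_le N m)

end DivisionRing

section Field

variable {K : Type*} [Field K] {μ ν : K}

lemma one_div_pow_mul_pow_sub_mul_pow_pred (hν : ν ≠ 0) {k n : ℕ} (hk : 1 ≤ k) (hkn : k ≤ n) :
    1 / ν ^ n * (μ ^ (n - k) * ν ^ (k - 1)) = 1 / ν * (μ / ν) ^ (n - k) := by
  have hn : ν ^ n = ν ^ (n - k) * (ν ^ (k - 1) * ν) := by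
    rw [pow_sub_one_mul (Nat.one_le_iff_ne_zero.mp hk), pow_sub_mul_pow ν hkn]
  rw [hn, div_pow]
  field_simp

lemma sum_one_div_pow_mul_pow_sub_mul_pow_pred (hν : ν ≠ 0) (hne : μ ≠ ν) {k : ℕ}
    (hk : 1 ≤ k) (M : ℕ) :
    ∑ n ∈ Icc k M, 1 / ν ^ n * (μ ^ (n - k) * ν ^ (k - 1)) =
      (1 - (μ / ν) ^ (M + 1 - k)) / (ν - μ) := by
  have hr : μ / ν ≠ 1 := div_ne_one_of_ne hne
  calc
    _ = ∑ n ∈ Icc k M, 1 / ν * (μ / ν) ^ (n - k) :=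
      sum_congr rfl fun n hn => one_div_pow_mul_pow_sub_mul_pow_pred hν hk (mem_Icc.mp hn).1
    _ = 1 / ν * (((μ / ν) ^ (M + 1 - k) - 1) / (μ / ν - 1)) := by
      rw [← mul_sum, sum_Icc_pow_sub_left hr]
    _ = ((μ / ν) ^ (M + 1 - k) - 1) / (μ - ν) := by
      rw [div_mul_div_comm, one_mul, mul_sub_one, mul_div_cancel₀ μ hν]
    _ = (1 - (μ / ν) ^ (M + 1 - k)) / (ν - μ) := by
      rw [← neg_sub, ← neg_sub ν μ, neg_div_neg_eq]

theorem stmt_3_general {M m : ℕ} (hmM : m ≤ M) (hμ : μ ≠ 0) (hν : ν ≠ 0) (hne : μ ≠ ν) :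
    ∑ n ∈ Icc 1 M, (1 / ν ^ n) * ∑ k ∈ Icc 1 (min m n), μ ^ (n - k) * ν ^ (k - 1) =
      ((μ / ν) ^ (M + 1) * (1 - (μ / ν) ^ (-(m : ℤ)))) / (1 - μ / ν) * (1 / (ν - μ))
        - (m : K) / (μ - ν) := by
  have hr : μ / ν ≠ 1 := div_ne_one_of_ne hne
  have hpow : (μ / ν) ^ (M + 1 - m) = (μ / ν) ^ (M + 1) * (μ / ν) ^ (-(m : ℤ)) := by
    rw [pow_sub₀ _ (div_ne_zero hμ hν) (by omega), zpow_neg, zpow_natCast]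
  calc
    _ = ∑ k ∈ Icc 1 m, ∑ n ∈ Icc k M, 1 / ν ^ n * (μ ^ (n - k) * ν ^ (k - 1)) := by
      simp only [mul_sum, sum_Icc_one_min_comm]
    _ = ∑ k ∈ Icc 1 m, (1 - (μ / ν) ^ (M + 1 - k)) / (ν - μ) :=
      sum_congr rfl fun k hk =>
        sum_one_div_pow_mul_pow_sub_mul_pow_pred hν hne (mem_Icc.mp hk).1 M
    _ = (m - ((μ / ν) ^ (M + 1) - (μ / ν) ^ (M + 1 - m)) / (μ / ν - 1)) / (ν - μ) := by
      rw [← sum_div, sum_sub_distrib, sum_Icc_one_pow_sub_right hr (by omega)]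
      simp only [sum_const, Nat.card_Icc, Nat.add_sub_cancel, nsmul_one]
    _ = _ := by
      rw [hpow, ← neg_sub 1 (μ / ν), ← neg_sub ν μ, div_neg, div_neg]
      ring

end Field

/-- Row-sum identity for the inverse of the birth-death matrix: the mean ON time
`E[T_on(m)]` equals the closed form of Eq. (9) of the paper. -/
theorem stmt_3 (M m : ℕ) (hm : 1 ≤ m) (hmM : m ≤ M) (μ ν : ℝ)
    (hμ : 0 < μ) (hν : 0 < ν) (hne : μ ≠ ν) :
    ∑ n ∈ Finset.Icc 1 M,
        (1 / ν ^ n) * ∑ k ∈ Finset.Icc 1 (min m n), μ ^ (n - k) * ν ^ (k - 1) =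
      ((μ / ν) ^ (M + 1) * (1 - (μ / ν) ^ (-(m : ℤ)))) / (1 - μ / ν) * (1 / (ν - μ))
        - (m : ℝ) / (μ - ν) :=
  stmt_3_general hmM hμ.ne' hν.ne' hne
end

section
/- Let N_T ≥ 1 be an integer and let μ, ν be positive reals with μ < ν. For each integer M₀ ≥ N_T, define η(M₀) = 1 / ( 1 + N_T·(1 − μ/ν)² / ( (μ/ν)^{M₀+2}·(1 − (μ/ν)^{−N_T}) + (μ/ν)·(1 − μ/ν)·N_T ) ). Then η is monotonically increasing in M₀: for all integers M₀, M₀′ with N_T ≤ M₀ ≤ M₀′, one has η(M₀) ≤ η(M₀′). -/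
/-! Put `r = μ / ν`. Summing the factorization `1 - r ^ m = (1 - r) * ∑ j < m, r ^ j` over
`m = M₀ - N_T + 1, …, M₀` shows that the denominator inside `η M₀` is `r * (1 - r) ^ 2` times a
sum of powers of `r`. Hence `(1 - r) ^ 2` cancels, and `M₀` enters `η M₀` only through that sum,
which gains positive terms as `M₀` grows, whether `r < 1` or `r > 1`. -/

open Finset

/-- The sum of the geometric sums of lengths `M, M - 1, …, M - N + 1`, which carries the dependence
of the energy availability on the storage capacity `M`. The lengths use truncated subtraction, so
the intended range is `N ≤ M`. -/
def stackedGeomSum {R : Type*} [Semiring R] (r : R) (N M : ℕ) : R :=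
  ∑ i ∈ range N, ∑ j ∈ range (M - i), r ^ j

section OrderedSemiring

variable {R : Type*} [Semiring R] [PartialOrder R] [IsStrictOrderedRing R] {r : R}

lemma strictMono_geom_sum (hr : 0 < r) : StrictMono fun n ↦ ∑ j ∈ range n, r ^ j :=
  strictMono_nat_of_lt_succ fun n ↦ by
    simpa only [sum_range_succ] using lt_add_of_pos_right _ (pow_pos hr n)

lemma stackedGeomSum_pos (hr : 0 ≤ r) {N M : ℕ} (hN : N ≠ 0) (hM : N ≤ M) :
    0 < stackedGeomSum r N M :=
  sum_pos (fun i hi ↦ geom_sum_pos hr (by grind)) (nonempty_range_iff.2 hN)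

lemma strictMonoOn_stackedGeomSum (hr : 0 < r) {N : ℕ} (hN : N ≠ 0) :
    StrictMonoOn (stackedGeomSum r N) (Set.Ici N) := fun M hM M' _ hMM' ↦
  sum_lt_sum_of_nonempty (nonempty_range_iff.2 hN) fun i hi ↦
    strictMono_geom_sum hr (by grind)

end OrderedSemiring

lemma pow_mul_one_sub_zpow_neg_add_eq_stackedGeomSum {K : Type*} [Field K] {r : K} (hr : r ≠ 0)
    {N M : ℕ} (hM : N ≤ M) :
    r ^ (M + 2) * (1 - r ^ (-(N : ℤ))) + r * (1 - r) * N =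
      r * (1 - r) ^ 2 * stackedGeomSum r N M := by
  induction N with
  | zero => simp [stackedGeomSum]
  | succ N ih =>
    obtain ⟨k, rfl⟩ := Nat.exists_eq_add_of_le (N.le_succ.trans hM)
    have increment : r ^ (N + k + 2) * (r ^ (-(N : ℤ)) - r ^ (-((N + 1 : ℕ) : ℤ))) + r * (1 - r) =
        r * (1 - r) * (1 - r ^ k) := by
      simp only [zpow_neg, zpow_natCast]
      field_simp
      ring
    have sum_succ : stackedGeomSum r (N + 1) (N + k) =
        stackedGeomSum r N (N + k) + ∑ j ∈ range k, r ^ j := by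
      rw [stackedGeomSum, sum_range_succ, Nat.add_sub_cancel_left, stackedGeomSum]
    rw [← mul_neg_geom_sum] at increment
    rw [sum_succ]
    push_cast at increment ⊢
    linear_combination ih (by lia) + increment

theorem stmt_8_general (N_T : ℕ) (hN : 1 ≤ N_T) (μ ν : ℝ)
    (hμ : 0 < μ) (hν : 0 < ν) (hne : μ ≠ ν)
    (η : ℕ → ℝ)
    (hη : ∀ M₀ : ℕ, N_T ≤ M₀ →
      η M₀ = 1 / (1 + (N_T : ℝ) * (1 - μ / ν) ^ 2 /
        ((μ / ν) ^ (M₀ + 2) * (1 - (μ / ν) ^ (-(N_T : ℤ)))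
          + (μ / ν) * (1 - μ / ν) * (N_T : ℝ)))) :
    StrictMonoOn η (Set.Ici N_T) := by
  have hr : 0 < μ / ν := div_pos hμ hν
  have hr1 : (1 - μ / ν) ^ 2 ≠ 0 := pow_ne_zero 2 (sub_ne_zero.2 (div_ne_one_of_ne hne).symm)
  have hN0 : N_T ≠ 0 := Nat.one_le_iff_ne_zero.1 hN
  have η_eq (M : ℕ) (hM : N_T ≤ M) :
      η M = 1 / (1 + N_T / (μ / ν * stackedGeomSum (μ / ν) N_T M)) := by
    rw [hη M hM, pow_mul_one_sub_zpow_neg_add_eq_stackedGeomSum hr.ne' hM, mul_right_comm,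
      mul_div_mul_right _ _ hr1]
  intro M hM M' hM' hMM'
  have geomSum_pos : 0 < stackedGeomSum (μ / ν) N_T M := stackedGeomSum_pos hr.le hN0 hM
  have geomSum_lt := strictMonoOn_stackedGeomSum hr hN0 hM hM' hMM'
  have geomSum_pos' := geomSum_pos.trans geomSum_lt
  rw [η_eq M hM, η_eq M' hM']
  gcongr

/-- When μ < ν, the energy availability `η(M₀)` of Theorem 1 is monotonically
increasing in the storage capacity `M₀`. -/
theorem stmt_8 (N_T : ℕ) (hN : 1 ≤ N_T) (μ ν : ℝ)
    (hμ : 0 < μ) (hν : 0 < ν) (hlt : μ < ν)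
    (η : ℕ → ℝ)
    (hη : ∀ M₀ : ℕ, N_T ≤ M₀ →
      η M₀ = 1 / (1 + (N_T : ℝ) * (1 - μ / ν) ^ 2 /
        ((μ / ν) ^ (M₀ + 2) * (1 - (μ / ν) ^ (-(N_T : ℤ)))
          + (μ / ν) * (1 - μ / ν) * (N_T : ℝ)))) :
    ∀ M₀ M₀' : ℕ, N_T ≤ M₀ → M₀ ≤ M₀' → η M₀ ≤ η M₀' :=
  fun _ _ hM hMM' ↦ (stmt_8_general N_T hN μ ν hμ hν hlt.ne η hη).monotoneOn
    hM (hM.trans hMM') hMM'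
end

section
/- Let N_T ≥ 1 and M₀ ≥ N_T be integers and let ν > 0 be a real number. For μ ∈ (0, ν), define η(μ) = 1 / ( 1 + N_T·(1 − μ/ν)² / ( (μ/ν)^{M₀+2}·(1 − (μ/ν)^{−N_T}) + (μ/ν)·(1 − μ/ν)·N_T ) ). Then η is monotonically increasing in μ on (0, ν): for all 0 < μ ≤ μ′ < ν, one has η(μ) ≤ η(μ′). -/
/-!
In terms of the ratio `x = μ / ν`, the denominator in `η` has a double root at `x = 1`. Dividing it
by `(1 - x) ^ 2` leaves a sum `P x` of positive powers of `x`, so `η = 1 / (1 + N_T / P x)`, in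
which `P` increases with `x` and `t ↦ 1 / (1 + N_T / t)` increases with `t > 0`.
-/

open Finset Set

/-- The double geometric sum `∑ j < N, (x + x ^ 2 + ⋯ + x ^ (k + j))`. With `k = M₀ + 1 - N_T` it is
the cofactor of `(1 - x) ^ 2` in the denominator of the energy availability. -/
def doubleGeomSum {R : Type*} [Semiring R] (N k : ℕ) (x : R) : R :=
  ∑ j ∈ range N, ∑ i ∈ range (k + j), x ^ (i + 1)

/-- The energy availability of a device with cutoff level `N` and battery capacity `M`, as a
function of the ratio `x = μ / ν` of the harvesting rate to the depletion rate, through which alone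
it depends on these rates. -/
def energyAvailability {K : Type*} [Field K] (N M : ℕ) (x : K) : K :=
  1 / (1 + (N : K) * (1 - x) ^ 2 /
    (x ^ (M + 2) * (1 - x ^ (-(N : ℤ))) + x * (1 - x) * (N : K)))

theorem one_sub_sq_mul_doubleGeomSum {R : Type*} [CommRing R] (N k : ℕ) (x : R) :
    (1 - x) ^ 2 * doubleGeomSum N k x = x ^ (k + N + 1) - x ^ (k + 1) + x * (1 - x) * N := by
  induction N with
  | zero => simp [doubleGeomSum]
  | succ N ih =>
    have inner_sum : (1 - x) * ∑ i ∈ range (k + N), x ^ (i + 1) = x - x ^ (k + N + 1) := by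
      simp only [pow_succ', ← mul_sum]
      linear_combination x * mul_neg_geom_sum x (k + N)
    rw [doubleGeomSum] at ih ⊢
    rw [sum_range_succ, mul_add, ih]
    push_cast
    linear_combination (1 - x) * inner_sum

@[simp]
theorem doubleGeomSum_zero_right {R : Type*} [Semiring R] (N k : ℕ) :
    doubleGeomSum N k (0 : R) = 0 := by
  simp [doubleGeomSum]

theorem strictMonoOn_doubleGeomSum {R : Type*} [Semiring R] [LinearOrder R] [IsStrictOrderedRing R]
    {N k : ℕ} (hN : 0 < N) (hk : 1 < k + N) :
    StrictMonoOn (doubleGeomSum N k : R → R) (Ici 0) := by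
  intro x (hx : 0 ≤ x) y _ hxy
  have last_nonempty : (range (k + (N - 1))).Nonempty := nonempty_range_iff.mpr (by lia)
  refine sum_lt_sum (fun j _ ↦ sum_le_sum fun i _ ↦ pow_le_pow_left₀ hx hxy.le _)
    ⟨N - 1, mem_range.mpr (by lia), ?_⟩
  exact sum_lt_sum_of_nonempty last_nonempty fun i _ ↦ pow_lt_pow_left₀ hxy hx i.succ_ne_zero

theorem doubleGeomSum_pos {R : Type*} [Semiring R] [LinearOrder R] [IsStrictOrderedRing R]
    {N k : ℕ} (hN : 0 < N) (hk : 1 < k + N) {x : R} (hx : 0 < x) : 0 < doubleGeomSum N k x := by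
  simpa using strictMonoOn_doubleGeomSum hN hk self_mem_Ici hx.le hx

theorem energyAvailability_eq_one_div_one_add_div {K : Type*} [Field K] {N M : ℕ}
    (hNM : N ≤ M + 1) {x : K} (hx₀ : x ≠ 0) (hx₁ : x ≠ 1) :
    energyAvailability N M x = 1 / (1 + N / doubleGeomSum N (M + 1 - N) x) := by
  obtain ⟨k, hk⟩ := Nat.exists_eq_add_of_le' hNM
  have hpow : x ^ (k + N + 1) * (1 - x ^ (-(N : ℤ))) = x ^ (k + N + 1) - x ^ (k + 1) := by
    rw [zpow_neg, zpow_natCast]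
    field_simp
    ring
  rw [energyAvailability, show M + 2 = k + N + 1 by lia, show M + 1 - N = k by lia, hpow,
    ← one_sub_sq_mul_doubleGeomSum, mul_comm (N : K),
    mul_div_mul_left _ _ (pow_ne_zero 2 (sub_ne_zero.mpr hx₁.symm))]

section LinearOrderedField

variable {K : Type*} [Field K] [LinearOrder K] [IsStrictOrderedRing K]

theorem strictMonoOn_one_div_one_add_div {c : K} (hc : 0 < c) :
    StrictMonoOn (fun t ↦ 1 / (1 + c / t)) (Ioi 0) := by
  intro s (hs : 0 < s) t (ht : 0 < t) hst
  dsimp only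
  gcongr

theorem strictMonoOn_energyAvailability {N M : ℕ} (hN : 0 < N) (hM : 0 < M) (hNM : N ≤ M + 1) :
    StrictMonoOn (energyAvailability N M : K → K) (Ioo 0 1) := by
  have hk : 1 < M + 1 - N + N := by lia
  have closed_form : EqOn (fun x : K ↦ 1 / (1 + N / doubleGeomSum N (M + 1 - N) x))
      (energyAvailability N M) (Ioo 0 1) := fun x hx ↦
    (energyAvailability_eq_one_div_one_add_div hNM hx.1.ne' hx.2.ne).symm
  refine StrictMonoOn.congr ?_ closed_form
  exact (strictMonoOn_one_div_one_add_div (Nat.cast_pos.mpr hN)).comp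
    ((strictMonoOn_doubleGeomSum hN hk).mono fun x hx ↦ hx.1.le)
    fun x hx ↦ doubleGeomSum_pos hN hk hx.1

theorem stmt_9_general {N M : ℕ} (hN : 0 < N) (hM : 0 < M) (hNM : N ≤ M + 1) {ν : K} (hν : 0 < ν) :
    StrictMonoOn (fun μ ↦ energyAvailability N M (μ / ν)) (Ioo 0 ν) :=
  (strictMonoOn_energyAvailability hN hM hNM).comp
    (fun _ _ _ _ h ↦ div_lt_div_of_pos_right h hν)
    fun _ hμ ↦ ⟨div_pos hμ.1 hν, (div_lt_one hν).mpr hμ.2⟩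

end LinearOrderedField

/-- The energy availability `η(μ)` of Theorem 1 is monotonically increasing in the
energy harvesting rate `μ` on `(0, ν)`. -/
theorem stmt_9 (N_T M₀ : ℕ) (hN : 1 ≤ N_T) (hNM : N_T ≤ M₀) (ν : ℝ) (hν : 0 < ν)
    (η : ℝ → ℝ)
    (hη : ∀ μ : ℝ, 0 < μ → μ < ν →
      η μ = 1 / (1 + (N_T : ℝ) * (1 - μ / ν) ^ 2 /
        ((μ / ν) ^ (M₀ + 2) * (1 - (μ / ν) ^ (-(N_T : ℤ)))
          + (μ / ν) * (1 - μ / ν) * (N_T : ℝ)))) :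
    ∀ μ μ' : ℝ, 0 < μ → μ ≤ μ' → μ' < ν → η μ ≤ η μ' := by
  have hη' : EqOn (fun μ ↦ energyAvailability N_T M₀ (μ / ν)) η (Ioo 0 ν) :=
    fun μ hμ ↦ (hη μ hμ.1 hμ.2).symm
  have hmono : StrictMonoOn η (Ioo 0 ν) :=
    (stmt_9_general hN (hN.trans hNM) (Nat.le_succ_of_le hNM) hν).congr hη'
  intro μ μ' hμ hle hμ'
  exact hmono.monotoneOn ⟨hμ, hle.trans_lt hμ'⟩ ⟨hμ.trans_le hle, hμ'⟩ hle
end
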